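/- arXiv:1610.04364 — 3 statements merged into one kernel-verified Lean document; each statement's English description precedes it below -/
import Mathlib

section
/- Let $0 < R \le 1/2$, $\sigma > 0$, $u > 0$, $q > 0$, and define the approximated system delay $\tilde{\gamma}(\varepsilon) = \frac{\sqrt{2}\,\sigma\,\operatorname{artanh}(1-2\varepsilon)}{u} + R\,\frac{\varepsilon(1-\varepsilon)\,q^2}{(1-\varepsilon-R)^2}$. Then $\tilde{\gamma}$ has at least one local minimum in the open interval $(0, 1-R)$, i.e. there exists $\varepsilon^{\star} \in (0, 1-R)$ such that $\tilde{\gamma}$ attains a local minimum at $\varepsilon^{\star}$. -/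
/-!
The delay tends to `+∞` at both ends of `(0, 1-R)`: at `0` because of the `artanh` term, at `1-R`
because of the double pole of the second term (the `artanh` term is continuous there, as
`0 < 1-R < 1`). It therefore exceeds a given interior value near both ends, and being
continuous it attains its minimum over a suitable compact subinterval, at an interior point.
-/

/-- The inverse hyperbolic tangent, `artanh x = ½ log((1+x)/(1-x))`. -/
noncomputable def artanh (x : ℝ) : ℝ := Real.log ((1 + x) / (1 - x)) / 2

open Filter Topology Set

/-- A continuous function on `(a, b)` blowing up at both ends has an interior local minimum. -/
lemma exists_isLocalMin_of_tendsto_atTop {f : ℝ → ℝ} {a b : ℝ} (hab : a < b)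
    (hc : ContinuousOn f (Ioo a b)) (ha : Tendsto f (𝓝[>] a) atTop)
    (hb : Tendsto f (𝓝[<] b) atTop) : ∃ x ∈ Ioo a b, IsLocalMin f x := by
  obtain ⟨m, ham, hmb⟩ := exists_between hab
  obtain ⟨c, hc1, hc2⟩ := ((ha.eventually_gt_atTop (f m)).and (Ioo_mem_nhdsGT ham)).exists
  obtain ⟨d, hd1, hd2⟩ := ((hb.eventually_gt_atTop (f m)).and (Ioo_mem_nhdsLT hmb)).exists
  have hsub : Icc c d ⊆ Ioo a b := fun x hx => ⟨hc2.1.trans_le hx.1, hx.2.trans_lt hd2.2⟩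
  obtain ⟨x, hx, hmin⟩ := isCompact_Icc.exists_isMinOn
    (nonempty_Icc.2 (hc2.2.trans hd2.1).le) (hc.mono hsub)
  have hxm : f x ≤ f m := hmin ⟨hc2.2.le, hd2.1.le⟩
  have hxc : c < x := hx.1.lt_of_ne (by rintro rfl; exact absurd hxm hc1.not_ge)
  have hxd : x < d := hx.2.lt_of_ne (by rintro rfl; exact absurd hxm hd1.not_ge)
  exact ⟨x, hsub hx, hmin.isLocalMin (Icc_mem_nhds hxc hxd)⟩

lemma continuousAt_artanh_one_sub_two_mul {x : ℝ} (h0 : 0 < x) (h1 : x < 1) :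
    ContinuousAt (fun ε : ℝ => artanh (1 - 2 * ε)) x := by
  unfold artanh
  have h2 : 1 - (1 - 2 * x) ≠ 0 := by linarith
  have h3 : (1 + (1 - 2 * x)) / (1 - (1 - 2 * x)) ≠ 0 := div_ne_zero (by linarith) h2
  have h4 : ContinuousAt (fun ε : ℝ => (1 + (1 - 2 * ε)) / (1 - (1 - 2 * ε))) x :=
    ContinuousAt.div (by fun_prop) (by fun_prop) h2
  exact (h4.log h3).div_const 2

lemma tendsto_artanh_one_sub_two_mul :
    Tendsto (fun ε : ℝ => artanh (1 - 2 * ε)) (𝓝[>] 0) atTop := by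
  unfold artanh
  refine Tendsto.atTop_div_const two_pos (Real.tendsto_log_atTop.comp ?_)
  have hnum : Tendsto (fun ε : ℝ => 1 - ε) (𝓝[>] 0) (𝓝 1) := by
    have : ContinuousAt (fun ε : ℝ => 1 - ε) 0 := by fun_prop
    simpa using this.tendsto.mono_left nhdsWithin_le_nhds
  refine (hnum.pos_mul_atTop one_pos tendsto_inv_nhdsGT_zero).congr' ?_
  filter_upwards [self_mem_nhdsWithin] with ε (hε : 0 < ε)
  have : 1 - (1 - 2 * ε) = 2 * ε := by ring
  rw [this]
  field_simp
  ring

lemma continuousAt_delay_ratio {R q x : ℝ} (hx : x < 1 - R) :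
    ContinuousAt (fun ε : ℝ => R * (ε * (1 - ε) * q ^ 2 / (1 - ε - R) ^ 2)) x := by
  have h : (1 - x - R) ^ 2 ≠ 0 := pow_ne_zero _ (by linarith)
  exact continuousAt_const.mul (ContinuousAt.div (by fun_prop) (by fun_prop) h)

lemma tendsto_delay_ratio {R q : ℝ} (hR : 0 < R) (hR1 : R < 1) (hq : 0 < q) :
    Tendsto (fun ε : ℝ => R * (ε * (1 - ε) * q ^ 2 / (1 - ε - R) ^ 2)) (𝓝[<] (1 - R)) atTop := by
  refine Tendsto.const_mul_atTop hR ?_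
  simp only [div_eq_mul_inv]
  have hnum : Tendsto (fun ε : ℝ => ε * (1 - ε) * q ^ 2) (𝓝[<] (1 - R))
      (𝓝 ((1 - R) * (1 - (1 - R)) * q ^ 2)) := by
    have : ContinuousAt (fun ε : ℝ => ε * (1 - ε) * q ^ 2) (1 - R) := by fun_prop
    exact this.tendsto.mono_left nhdsWithin_le_nhds
  have hpos : 0 < (1 - R) * (1 - (1 - R)) * q ^ 2 := by
    have h1 : 0 < 1 - R := by linarith
    have h2 : 0 < 1 - (1 - R) := by linarith
    positivity
  refine hnum.pos_mul_atTop hpos (tendsto_inv_nhdsGT_zero.comp ?_)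
  refine tendsto_nhdsWithin_iff.2 ⟨?_, ?_⟩
  · have : ContinuousAt (fun ε : ℝ => (1 - ε - R) ^ 2) (1 - R) := by fun_prop
    simpa using this.tendsto.mono_left nhdsWithin_le_nhds
  · filter_upwards [self_mem_nhdsWithin] with ε (hε : ε < 1 - R)
    exact pow_pos (by linarith : 0 < 1 - ε - R) 2

/-- The approximated system delay
`γ̃(ε) = √2 σ artanh(1-2ε)/u + R ε(1-ε)q²/(1-ε-R)²`
has at least one local minimum in the open interval `(0, 1-R)`. -/
theorem stmt_0 (R σ u q : ℝ) (hR : 0 < R) (hR2 : R ≤ 1/2) (hσ : 0 < σ)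
    (hu : 0 < u) (hq : 0 < q)
    (γ : ℝ → ℝ)
    (hγ : ∀ ε : ℝ, γ ε = Real.sqrt 2 * σ * artanh (1 - 2 * ε) / u
      + R * (ε * (1 - ε) * q ^ 2 / (1 - ε - R) ^ 2)) :
    ∃ εstar : ℝ, εstar ∈ Set.Ioo 0 (1 - R) ∧ IsLocalMin γ εstar := by
  obtain rfl : γ = fun ε => Real.sqrt 2 * σ * artanh (1 - 2 * ε) / u
      + R * (ε * (1 - ε) * q ^ 2 / (1 - ε - R) ^ 2) := funext hγ
  have hK : 0 < Real.sqrt 2 * σ := by positivity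
  have hcont : ∀ x : ℝ, 0 < x → x < 1 →
      ContinuousAt (fun ε : ℝ => Real.sqrt 2 * σ * artanh (1 - 2 * ε) / u) x := fun x h0 h1 =>
    (continuousAt_const.mul (continuousAt_artanh_one_sub_two_mul h0 h1)).div_const u
  refine exists_isLocalMin_of_tendsto_atTop (by linarith) ?_ ?_ ?_
  · intro x hx
    exact ((hcont x hx.1 (by linarith [hx.2])).add
      (continuousAt_delay_ratio hx.2)).continuousWithinAt
  · exact ((tendsto_artanh_one_sub_two_mul.const_mul_atTop hK).atTop_div_const hu).atTop_add
      ((continuousAt_delay_ratio (by linarith)).tendsto.mono_left nhdsWithin_le_nhds)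
  · exact ((hcont (1 - R) (by linarith) (by linarith)).tendsto.mono_left
      nhdsWithin_le_nhds).add_atTop (tendsto_delay_ratio hR (by linarith) hq)
end

section
/- Let $0 < R \le 1/2$, $\sigma > 0$, $u > 0$, $q > 0$, and define the approximated system delay $\tilde{\gamma}(\varepsilon) = \frac{\sqrt{2}\,\sigma\,\operatorname{artanh}(1-2\varepsilon)}{u} + R\,\frac{\varepsilon(1-\varepsilon)\,q^2}{(1-\varepsilon-R)^2}$. Define the cubic coefficients $a = -2Rq^2u(2R-1) + \sqrt{2}\sigma$, $b = 2Rq^2u(2R-1) - 2Rq^2u(1-R) + \sqrt{2}\sigma(3R-3)$, $c = 2Rq^2u(1-R) + \sqrt{2}\sigma\big((R-1)(2R-2) + (R-1)^2\big)$, $d = \sqrt{2}\sigma(R-1)^3$. Then there exists a unique $\varepsilon^{\star} \in (0, 1-R)$ satisfying $a(\varepsilon^{\star})^3 + b(\varepsilon^{\star})^2 + c\,\varepsilon^{\star} + d = 0$, and this $\varepsilon^{\star}$ is a global minimizer of $\tilde{\gamma}$ on $(0, 1-R)$, i.e. $\tilde{\gamma}(\varepsilon^{\star}) \le \tilde{\gamma}(\varepsilon)$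 for all $\varepsilon \in (0, 1-R)$. -/
/-- The factored form of the cubic, with `s = √2 σ` and `K = 2 R q² u`. -/
noncomputable def delayCubic (R s K x : ℝ) : ℝ :=
  s * (x - (1 - R)) ^ 3 + K * (x * (1 - x) * ((1 - R) - (1 - 2 * R) * x))

/-- Strict monotonicity of `p(x) / (1 - R - x) ^ 3` on `(0, 1 - R)`, cross-multiplied. -/
lemma cubic_cross_lt {R s K x y : ℝ} (hR : 0 < R) (hK : 0 < K)
    (hx : 0 < x) (hxy : x < y) (hy : y < 1 - R) :
    delayCubic R s K x * (1 - R - y) ^ 3 < delayCubic R s K y * (1 - R - x) ^ 3 := by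
  have hmy : 0 < 1 - R - y := by linarith
  have hmx : 0 < 1 - R - x := by linarith
  have hd : 0 < y - x := by linarith
  have h1 : x * (1 - x) * (1 - R - y) ^ 2 < y * (1 - y) * (1 - R - x) ^ 2 := by
    -- The difference is `y - x` times a factor positive for `x`, `y` below `1 - R`.
    have e : y * (1 - y) * (1 - R - x) ^ 2 - x * (1 - x) * (1 - R - y) ^ 2
        = (y - x) * ((1 - R - x) * (1 - R - y)
          + R * (x * (1 - R - y) + y * (1 - R - x))) := by ring
    have : 0 < (y - x) * ((1 - R - x) * (1 - R - y)
          + R * (x * (1 - R - y) + y * (1 - R - x))) := by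
      have h5 : 0 < y := by linarith
      positivity
    linarith
  have h2 : ((1 - R) - (1 - 2 * R) * x) * (1 - R - y)
      ≤ ((1 - R) - (1 - 2 * R) * y) * (1 - R - x) := by
    nlinarith [mul_pos (mul_pos hR hd) (by linarith : 0 < 1 - R)]
  have hN : 0 < (1 - R) - (1 - 2 * R) * x := by nlinarith
  have h3 := mul_lt_mul h1 h2 (mul_pos hN hmy)
    (mul_nonneg (mul_nonneg (by linarith) (by linarith)) (sq_nonneg _))
  have h4 := mul_lt_mul_of_pos_left h3 hK
  unfold delayCubic
  linear_combination h4

lemma hasDerivAt_delay {R σ u q : ℝ} (hR : 0 < R) (hu : 0 < u) (γ : ℝ → ℝ)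
    (hγ : ∀ ε : ℝ, γ ε = Real.sqrt 2 * σ * artanh (1 - 2 * ε) / u
      + R * (ε * (1 - ε) * q ^ 2 / (1 - ε - R) ^ 2))
    {x : ℝ} (hx : x ∈ Set.Ioo 0 (1 - R)) :
    HasDerivAt γ (delayCubic R (Real.sqrt 2 * σ) (2 * R * q ^ 2 * u) x
      / (2 * u * x * (1 - x) * (1 - R - x) ^ 3)) x := by
  obtain ⟨h0, h1⟩ := hx
  have hx1 : 0 < 1 - x := by linarith
  have hm : 0 < 1 - x - R := by linarith
  have hm' : 1 - R - x ≠ 0 := by linarith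
  rw [show γ = fun ε => Real.sqrt 2 * σ * artanh (1 - 2 * ε) / u
      + R * (ε * (1 - ε) * q ^ 2 / (1 - ε - R) ^ 2) from funext hγ]
  unfold artanh
  have hi := hasDerivAt_id' x
  have hlin := (hi.const_mul 2).const_sub 1
  have hquot := (hlin.const_add 1).fun_div (hlin.const_sub 1) (by linarith)
  have hlog := hquot.log (by
    have : 0 < (1 + (1 - 2 * x)) / (1 - (1 - 2 * x)) := div_pos (by linarith) (by linarith)
    exact this.ne')
  have hfirst := ((hlog.div_const 2).const_mul (Real.sqrt 2 * σ)).div_const u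
  have hnum := (hi.fun_mul (hi.const_sub 1)).mul_const (q ^ 2)
  have hden := ((hi.const_sub 1).sub_const R).fun_pow 2
  have hsecond := (hnum.fun_div hden (by positivity)).const_mul R
  refine (hfirst.fun_add hsecond).congr_deriv ?_
  unfold delayCubic
  have e1 : 1 + (1 - 2 * x) = 2 * (1 - x) := by ring
  have e2 : 1 - (1 - 2 * x) = 2 * x := by ring
  have e3 : 1 - R - x = 1 - x - R := by ring
  rw [e1, e2, e3]
  have := h0.ne'
  have := hx1.ne'
  have := hm.ne'
  have := hu.ne'
  field_simp
  ring

/-- There is a unique root of the cubic `aε³+bε²+cε+d` in `(0, 1-R)`,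
and that root is a global minimizer of the approximated system delay on `(0, 1-R)`. -/
theorem stmt_2 (R σ u q : ℝ) (hR : 0 < R) (hR2 : R ≤ 1/2) (hσ : 0 < σ)
    (hu : 0 < u) (hq : 0 < q)
    (γ : ℝ → ℝ)
    (hγ : ∀ ε : ℝ, γ ε = Real.sqrt 2 * σ * artanh (1 - 2 * ε) / u
      + R * (ε * (1 - ε) * q ^ 2 / (1 - ε - R) ^ 2))
    (a b c d : ℝ)
    (ha : a = -2 * R * q ^ 2 * u * (2 * R - 1) + Real.sqrt 2 * σ)
    (hb : b = 2 * R * q ^ 2 * u * (2 * R - 1) - 2 * R * q ^ 2 * u * (1 - R)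
      + Real.sqrt 2 * σ * (3 * R - 3))
    (hc : c = 2 * R * q ^ 2 * u * (1 - R)
      + Real.sqrt 2 * σ * ((R - 1) * (2 * R - 2) + (R - 1) ^ 2))
    (hd : d = Real.sqrt 2 * σ * (R - 1) ^ 3) :
    ∃ εstar : ℝ, εstar ∈ Set.Ioo 0 (1 - R)
      ∧ a * εstar ^ 3 + b * εstar ^ 2 + c * εstar + d = 0
      ∧ (∀ ε ∈ Set.Ioo (0 : ℝ) (1 - R), a * ε ^ 3 + b * ε ^ 2 + c * ε + d = 0 → ε = εstar)
      ∧ (∀ ε ∈ Set.Ioo (0 : ℝ) (1 - R), γ εstar ≤ γ ε) := by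
  have hs : 0 < Real.sqrt 2 * σ := by positivity
  have hK : 0 < 2 * R * q ^ 2 * u := by positivity
  have hp : ∀ x, a * x ^ 3 + b * x ^ 2 + c * x + d
      = delayCubic R (Real.sqrt 2 * σ) (2 * R * q ^ 2 * u) x := by
    intro x
    rw [ha, hb, hc, hd]
    unfold delayCubic
    ring
  simp only [hp]
  have hder := fun x hx => hasDerivAt_delay (R := R) (x := x) hR hu γ hγ hx
  generalize Real.sqrt 2 * σ = s at *
  generalize 2 * R * q ^ 2 * u = K at *
  have hm : 0 < 1 - R := by linarith
  have hp0 : delayCubic R s K 0 < 0 := by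
    have : 0 < s * (1 - R) ^ 3 := by positivity
    unfold delayCubic
    linear_combination this
  have hpm : 0 < delayCubic R s K (1 - R) := by
    have : 0 < K * ((1 - R) * R * ((1 - R) * (2 * R))) := by positivity
    unfold delayCubic
    linear_combination this
  have hcont : Continuous (delayCubic R s K) := by
    unfold delayCubic
    fun_prop
  obtain ⟨e, ⟨he0, hem⟩, he⟩ := intermediate_value_Ioo hm.le hcont.continuousOn ⟨hp0, hpm⟩
  have hneg : ∀ x, 0 < x → x < e → delayCubic R s K x < 0 := by
    intro x hx hxe
    have h := cubic_cross_lt (s := s) hR hK hx hxe hem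
    rw [he, zero_mul] at h
    have : 0 < (1 - R - e) ^ 3 := pow_pos (by linarith) 3
    exact neg_of_mul_neg_left h this.le
  have hpos : ∀ x, e < x → x < 1 - R → 0 < delayCubic R s K x := by
    intro x hxe hx
    have h := cubic_cross_lt (s := s) hR hK he0 hxe hx
    rw [he, zero_mul] at h
    have : 0 < (1 - R - e) ^ 3 := pow_pos (by linarith) 3
    exact pos_of_mul_pos_left h this.le
  have hden : ∀ x ∈ Set.Ioo 0 (1 - R), 0 < 2 * u * x * (1 - x) * (1 - R - x) ^ 3 := by
    rintro x ⟨h0, h1⟩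
    have : 0 < 1 - x := by linarith
    have : 0 < 1 - R - x := by linarith
    positivity
  refine ⟨e, ⟨he0, hem⟩, he, ?_, ?_⟩
  · rintro x ⟨h0, h1⟩ hx
    rcases lt_trichotomy x e with h | h | h
    · exact absurd hx (hneg x h0 h).ne
    · exact h
    · exact absurd hx (hpos x h h1).ne'
  · rintro x ⟨h0, h1⟩
    rcases le_total x e with h | h
    · have hsub : Set.Icc x e ⊆ Set.Ioo 0 (1 - R) :=
        fun y hy => ⟨h0.trans_le hy.1, hy.2.trans_lt hem⟩
      refine antitoneOn_of_deriv_nonpos (convex_Icc x e)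
        (fun y hy => (hder y (hsub hy)).continuousAt.continuousWithinAt)
        (fun y hy => (hder y (hsub (interior_subset hy))).differentiableAt.differentiableWithinAt)
        ?_ (Set.left_mem_Icc.2 h) (Set.right_mem_Icc.2 h) h
      intro y hy
      have hy' := hsub (interior_subset hy)
      rw [interior_Icc] at hy
      rw [(hder y hy').deriv]
      exact (div_neg_of_neg_of_pos (hneg y hy'.1 hy.2) (hden y hy')).le
    · have hsub : Set.Icc e x ⊆ Set.Ioo 0 (1 - R) :=
        fun y hy => ⟨he0.trans_le hy.1, hy.2.trans_lt h1⟩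
      refine monotoneOn_of_deriv_nonneg (convex_Icc e x)
        (fun y hy => (hder y (hsub hy)).continuousAt.continuousWithinAt)
        (fun y hy => (hder y (hsub (interior_subset hy))).differentiableAt.differentiableWithinAt)
        ?_ (Set.left_mem_Icc.2 h) (Set.right_mem_Icc.2 h) h
      intro y hy
      have hy' := hsub (interior_subset hy)
      rw [interior_Icc] at hy
      rw [(hder y hy').deriv]
      exact (div_pos (hpos y hy.1 hy'.2) (hden y hy')).le
end

section
/- Let $0 < R \le 1/2$, $\sigma > 0$, $u > 0$, $q > 0$, and define the approximated system delay $\tilde{\gamma}(\varepsilon) = \frac{\sqrt{2}\,\sigma\,\operatorname{artanh}(1-2\varepsilon)}{u} + R\,\frac{\varepsilon(1-\varepsilon)\,q^2}{(1-\varepsilon-R)^2}$. Then there exists a unique $\varepsilon^{\star} \in (0, 1-R)$ such that $\tilde{\gamma}'(\varepsilon^{\star}) = 0$, where $\tilde{\gamma}'(\varepsilon) = \frac{\sigma}{\sqrt{2}\,u\,(\varepsilon-1)\varepsilon} - \frac{q^2 R\,\big(R(2\varepsilon-1) - \varepsilon + 1\big)}{(R+\varepsilon-1)^3}$. -/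
/-!
With `s = 1 - R - ε`, `A = σ / (√2 u)`, `B = q² R` and `N = R(2ε - 1) - ε + 1`, the equation
`γ' ε = 0` on `(0, 1 - R)` is equivalent to `B ε (1 - ε) N = A s³`. The difference of the two sides
is continuous, negative at `0` and positive at `1 - R`, which gives a root. For uniqueness,
`ε (1 - ε) N / s³` is strictly increasing, being the product of the positive increasing functions
`ε / s`, `(1 - ε) / s = 1 + R / s` and `N / s = (1 - 2R) + 2R(1 - R) / s`.
-/

/-- Clearing denominators in `γ' ε = 0`. -/
lemma deriv_eq_zero_iff {R σ u q ε : ℝ} (hR : 0 < R) (hu : 0 < u)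
    (h0 : 0 < ε) (h1 : ε < 1 - R) :
    σ / (Real.sqrt 2 * u * (ε - 1) * ε)
      - q ^ 2 * R * (R * (2 * ε - 1) - ε + 1) / (R + ε - 1) ^ 3 = 0 ↔
    q ^ 2 * R * (ε * (1 - ε) * (R * (2 * ε - 1) - ε + 1))
      - σ / (Real.sqrt 2 * u) * (1 - R - ε) ^ 3 = 0 := by
  have hs : R + ε - 1 ≠ 0 := by linarith
  have he : ε - 1 ≠ 0 := by linarith
  have h2 : Real.sqrt 2 ≠ 0 := by positivity
  rw [sub_eq_zero, div_eq_div_iff (by positivity) (by positivity), sub_eq_zero,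
    div_mul_eq_mul_div, eq_div_iff (by positivity)]
  constructor <;> intro h <;> linear_combination h

/-- Strict monotonicity of `ε (1 - ε) N / s³` on `(0, 1 - R)`, in cross-multiplied form. -/
lemma cross_lt {R x y : ℝ} (hR : 0 < R) (hR2 : R ≤ 1 / 2)
    (hx : 0 < x) (hxy : x < y) (hy : y < 1 - R) :
    x * (1 - x) * (R * (2 * x - 1) - x + 1) * (1 - R - y) ^ 3 <
      y * (1 - y) * (R * (2 * y - 1) - y + 1) * (1 - R - x) ^ 3 := by
  have hsy : 0 < 1 - R - y := by linarith
  have hsx : 0 < 1 - R - x := by linarith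
  have hNx : 0 < R * (2 * x - 1) - x + 1 := by nlinarith
  have h1x : 0 < 1 - x := by linarith
  have a1 : x * (1 - R - y) < y * (1 - R - x) := by nlinarith
  have a2 : (1 - x) * (1 - R - y) < (1 - y) * (1 - R - x) := by nlinarith
  have a3 : (R * (2 * x - 1) - x + 1) * (1 - R - y) <
      (R * (2 * y - 1) - y + 1) * (1 - R - x) := by
    have : 0 < 2 * R * (1 - R) * (y - x) :=
      mul_pos (mul_pos (by linarith) (by linarith)) (by linarith)
    nlinarith
  have b1 : 0 < x * (1 - R - y) := by positivity
  have b2 : 0 < (1 - x) * (1 - R - y) := by positivity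
  have b3 : 0 < (R * (2 * x - 1) - x + 1) * (1 - R - y) := by positivity
  have := mul_lt_mul'' (mul_lt_mul'' a1 a2 b1.le b2.le) a3 (mul_pos b1 b2).le b3.le
  linarith

/-- There is a unique `ε⋆ ∈ (0, 1-R)` with `γ̃'(ε⋆) = 0`, where
`γ̃'(ε) = σ/(√2 u (ε-1)ε) - q²R(R(2ε-1)-ε+1)/(R+ε-1)³`. -/
theorem stmt_8 (R σ u q : ℝ) (hR : 0 < R) (hR2 : R ≤ 1/2) (hσ : 0 < σ)
    (hu : 0 < u) (hq : 0 < q)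
    (γ' : ℝ → ℝ)
    (hγ' : ∀ ε : ℝ, γ' ε = σ / (Real.sqrt 2 * u * (ε - 1) * ε)
      - q ^ 2 * R * (R * (2 * ε - 1) - ε + 1) / (R + ε - 1) ^ 3) :
    ∃! εstar : ℝ, εstar ∈ Set.Ioo 0 (1 - R) ∧ γ' εstar = 0 := by
  have hA : 0 < σ / (Real.sqrt 2 * u) := by positivity
  have hB : 0 < q ^ 2 * R := by positivity
  have hR1 : 0 < 1 - R := by linarith
  have no_two : ∀ x y : ℝ, 0 < x → x < y → y < 1 - R → γ' x = 0 → γ' y = 0 → False := by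
    intro x y hx hxy hy ex ey
    rw [hγ', deriv_eq_zero_iff hR hu hx (hxy.trans hy)] at ex
    rw [hγ', deriv_eq_zero_iff hR hu (hx.trans hxy) hy] at ey
    have h := mul_lt_mul_of_pos_left (cross_lt hR hR2 hx hxy hy) hB
    refine h.ne ?_
    linear_combination (1 - R - y) ^ 3 * ex - (1 - R - x) ^ 3 * ey
  have hex : ∃ x ∈ Set.Ioo 0 (1 - R), γ' x = 0 := by
    let F : ℝ → ℝ := fun ε => q ^ 2 * R * (ε * (1 - ε) * (R * (2 * ε - 1) - ε + 1))
      - σ / (Real.sqrt 2 * u) * (1 - R - ε) ^ 3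
    have hF : ContinuousOn F (Set.Icc 0 (1 - R)) := by
      apply Continuous.continuousOn
      fun_prop
    have hF0 : F 0 < 0 := by
      have : 0 < σ / (Real.sqrt 2 * u) * (1 - R) ^ 3 := by positivity
      simp only [F]
      linarith
    have hF1 : 0 < F (1 - R) := by
      have : 0 < q ^ 2 * R * ((1 - R) * R * (2 * R * (1 - R))) := by positivity
      simp only [F]
      linarith
    obtain ⟨x, hx, hFx⟩ := intermediate_value_Ioo hR1.le hF ⟨hF0, hF1⟩
    exact ⟨x, hx, by rw [hγ', deriv_eq_zero_iff hR hu hx.1 hx.2]; exact hFx⟩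
  obtain ⟨x, hx, ex⟩ := hex
  refine ⟨x, ⟨hx, ex⟩, ?_⟩
  rintro y ⟨hy, ey⟩
  rcases lt_trichotomy y x with h | h | h
  · exact (no_two y x hy.1 h hx.2 ey ex).elim
  · exact h
  · exact (no_two x y hx.1 h hy.2 ex ey).elim
end
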